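/- Let X be a doubling metric measure space (every closed ball of positive radius having positive finite measure) and F ⊆ L^p(X) relatively compact, 1 ≤ p < ∞. Then for every ε > 0 there exists δ > 0 such that for all f ∈ F and all r ∈ (0,δ), ‖A_r f − f‖_p < ε. -/

import Mathlib

open MeasureTheory Metric
open scoped ENNReal

/-- The average function `A_r f (x) = μ(B(x,r))⁻¹ ∫_{B(x,r)} f dμ`. -/
noncomputable def avg {X : Type*} [MeasurableSpace X] [MetricSpace X]
    (μ : Measure X) (r : ℝ) (f : X → ℝ) (x : X) : ℝ :=
  (μ (closedBall x r)).toReal⁻¹ * ∫ y in closedBall x r, f y ∂μ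

/-!
If `x ∈ B(y, r)` then `B(y, r) ⊆ B(x, 2r)`, so doubling gives `μ B(x, r)⁻¹ ≤ C μ B(y, r)⁻¹`; with
Jensen's inequality and Tonelli's theorem this bounds `A_r` on `L^p` by `C ^ (1 / p)` for all small
`r`. Hence `f ↦ ‖A_r f - f‖_p` is Lipschitz uniformly in small `r`, and convergence to `0` on a
dense class implies convergence at every `f`, uniformly on totally bounded sets. The dense class
consists of the bounded functions whose support has a thickening of finite measure: for these the
Lebesgue differentiation theorem gives `A_r f → f` almost everywhere, dominated by a multiple of the
indicator of the thickening. Only small balls matter, so a locally finite, uniformly locally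
doubling measure on a second countable space suffices; when every ball has positive finite measure,
second countability holds because a disjoint family of balls is countable.
-/

open Filter Topology Set
open scoped NNReal

theorem eventually_forall_lt_of_totallyBounded {ι α : Type*} [PseudoEMetricSpace α] {l : Filter ι}
    {φ : ι → α → ℝ≥0∞} {K : ℝ≥0∞} (hK : K ≠ ⊤)
    (hφ : ∀ᶠ i in l, ∀ a b, φ i a ≤ K * edist a b + φ i b)
    (hlim : ∀ a, Tendsto (fun i => φ i a) l (𝓝 0)) {s : Set α} (hs : TotallyBounded s)
    {ε : ℝ≥0∞} (hε : 0 < ε) : ∀ᶠ i in l, ∀ a ∈ s, φ i a < ε := by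
  have hε2 : 0 < ε / 2 := ENNReal.half_pos hε.ne'
  obtain ⟨t, ht, hst⟩ := EMetric.totallyBounded_iff.1 hs (ε / 2 / K) (ENNReal.div_pos hε2.ne' hK)
  have ht_lim : ∀ᶠ i in l, ∀ b ∈ t, φ i b < ε / 2 :=
    (eventually_all_finite ht).2 fun b _ => (hlim b).eventually_lt_const hε2
  filter_upwards [hφ, ht_lim] with i hφi hti a ha
  obtain ⟨b, hb, hab⟩ := mem_iUnion₂.1 (hst ha)
  calc φ i a ≤ K * edist a b + φ i b := hφi a b
    _ < ε / 2 + ε / 2 := ENNReal.add_lt_add (ENNReal.mul_lt_of_lt_div' hab) (hti b hb)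
    _ = ε := ENNReal.add_halves ε

section Lp

variable {α ι E : Type*} [MeasurableSpace α] {μ : Measure α} [NormedAddCommGroup E] {p : ℝ≥0∞}

theorem tendsto_eLpNorm_zero_of_dominated {l : Filter ι} [l.IsCountablyGenerated]
    (hp : p ≠ ⊤) {f : ι → α → E} {g : α → ℝ} (hg : MemLp g p μ)
    (hf : ∀ i, AEStronglyMeasurable (f i) μ)
    (hfg : ∀ᶠ i in l, ∀ᵐ x ∂μ, ‖f i x‖ ≤ ‖g x‖)
    (hlim : ∀ᵐ x ∂μ, Tendsto (fun i => f i x) l (𝓝 0)) :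
    Tendsto (fun i => eLpNorm (f i) p μ) l (𝓝 0) := by
  rcases eq_or_ne p 0 with rfl | hp0
  · simp only [eLpNorm_exponent_zero, tendsto_const_nhds]
  have hp_pos : 0 < p.toReal := ENNReal.toReal_pos hp0 hp
  have tendsto_rpow {a : ℝ} (ha : 0 < a) {u : ι → ℝ≥0∞} (hu : Tendsto u l (𝓝 0)) :
      Tendsto (fun i => u i ^ a) l (𝓝 0) := by
    simpa only [ENNReal.zero_rpow_of_pos ha] using hu.ennrpow_const a
  have tendsto_lintegral :
      Tendsto (fun i => ∫⁻ x, ‖f i x‖ₑ ^ p.toReal ∂μ) l (𝓝 (∫⁻ _, 0 ∂μ)) := by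
    refine tendsto_lintegral_filter_of_dominated_convergence' (fun x => ‖g x‖ₑ ^ p.toReal)
      (Eventually.of_forall fun i => (hf i).enorm.pow_const _) ?_
      (lintegral_rpow_enorm_lt_top_of_eLpNorm_lt_top hp0 hp hg.2).ne ?_
    · filter_upwards [hfg] with i hi
      filter_upwards [hi] with x hx
      gcongr
      exact enorm_le_iff_norm_le.2 hx
    · filter_upwards [hlim] with x hx
      exact tendsto_rpow hp_pos (by simpa only [enorm_zero] using hx.enorm)
  rw [lintegral_zero] at tendsto_lintegral
  simp_rw [eLpNorm_eq_lintegral_rpow_enorm_toReal hp0 hp]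
  exact tendsto_rpow (one_div_pos.2 hp_pos) tendsto_lintegral

theorem tendsto_eLpNorm_sub_indicator (hp : p ≠ ⊤) {f : α → E} (hf : MemLp f p μ)
    {l : Filter ι} [l.IsCountablyGenerated] {s : ι → Set α} (hs : ∀ i, NullMeasurableSet (s i) μ)
    (hmem : ∀ x, ∀ᶠ i in l, x ∈ s i) :
    Tendsto (fun i => eLpNorm (f - (s i).indicator f) p μ) l (𝓝 0) := by
  simp_rw [← indicator_compl]
  refine tendsto_eLpNorm_zero_of_dominated hp hf.norm (fun i => hf.1.indicator₀ (hs i).compl)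
    (Eventually.of_forall fun i => Eventually.of_forall fun x => ?_)
    (Eventually.of_forall fun x => ?_)
  · exact (norm_indicator_le_norm_self f x).trans_eq (norm_norm _).symm
  · refine tendsto_const_nhds.congr' ?_
    filter_upwards [hmem x] with i hi
    exact (indicator_of_notMem (notMem_compl_iff.2 hi) f).symm

variable [NormedSpace ℝ E]

theorem enorm_average_rpow_le_laverage {q : ℝ} (hq : 1 ≤ q) {f : α → E}
    (hf : AEStronglyMeasurable f μ) :
    ‖⨍ x, f x ∂μ‖ₑ ^ q ≤ ⨍⁻ x, ‖f x‖ₑ ^ q ∂μ := by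
  have hq0 : 0 < q := one_pos.trans_le hq
  rw [average_eq', laverage_eq']
  -- `ν` is a probability measure, unless `μ univ` is `0` or `⊤`, when `ν = 0`.
  set ν : Measure α := (μ univ)⁻¹ • μ
  have hfν : AEStronglyMeasurable f ν := hf.smul_measure _
  rcases eq_zero_or_isProbabilityMeasure ν with hν | _
  · simp [hν, hq0]
  · have h_norm : ‖∫ x, f x ∂ν‖ₑ ≤ eLpNorm f (ENNReal.ofReal q) ν :=
      calc ‖∫ x, f x ∂ν‖ₑ
          ≤ eLpNorm f 1 ν :=
            (enorm_integral_le_lintegral_enorm f).trans_eq eLpNorm_one_eq_lintegral_enorm.symm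
        _ ≤ eLpNorm f (ENNReal.ofReal q) ν :=
            eLpNorm_le_eLpNorm_of_exponent_le (ENNReal.one_le_ofReal.2 hq) hfν
    rwa [eLpNorm_eq_lintegral_rpow_enorm_toReal (ENNReal.ofReal_pos.2 hq0).ne'
      ENNReal.ofReal_ne_top, ENNReal.toReal_ofReal hq0.le, one_div,
      ENNReal.le_rpow_inv_iff hq0] at h_norm

theorem norm_average_le_of_norm_le {f : α → E} {R : ℝ} (hR : 0 ≤ R) (hf : ∀ x, ‖f x‖ ≤ R) :
    ‖⨍ x, f x ∂μ‖ ≤ R := by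
  rw [average_eq']
  refine (norm_integral_le_of_norm_le_const (Eventually.of_forall hf)).trans ?_
  exact mul_le_of_le_one_right hR measureReal_le_one

end Lp

section Measure

variable {X : Type*} [PseudoMetricSpace X] [MeasurableSpace X] {μ : Measure X}

theorem sigmaFinite_of_measure_closedBall_lt_top
    (h : ∀ x r, 0 < r → μ (closedBall x r) < ⊤) : SigmaFinite μ := by
  rcases isEmpty_or_nonempty X with _ | ⟨⟨x₀⟩⟩
  · rw [Measure.eq_zero_of_isEmpty μ]
    infer_instance
  · refine ⟨⟨fun n : ℕ => closedBall x₀ (n + 1), fun _ => mem_univ _,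
      fun n => h _ _ n.cast_add_one_pos, iUnion_eq_univ_iff.2 fun x => ?_⟩⟩
    obtain ⟨n, hn⟩ := exists_nat_ge (dist x x₀)
    exact ⟨n, mem_closedBall.2 (hn.trans (le_add_of_nonneg_right zero_le_one))⟩

theorem isLocallyFiniteMeasure_of_measure_closedBall_lt_top
    (h : ∀ x r, 0 < r → μ (closedBall x r) < ⊤) : IsLocallyFiniteMeasure μ :=
  ⟨fun x => ⟨closedBall x 1, closedBall_mem_nhds x one_pos, h x 1 one_pos⟩⟩

theorem isOpenPosMeasure_of_measure_closedBall_ne_zero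
    (h : ∀ x r, 0 < r → μ (closedBall x r) ≠ 0) : μ.IsOpenPosMeasure := by
  refine ⟨fun U hU ⟨x, hx⟩ hU0 => ?_⟩
  obtain ⟨r, hr, hrU⟩ := nhds_basis_closedBall.mem_iff.1 (hU.mem_nhds hx)
  exact h x r hr (measure_mono_null hrU hU0)

theorem secondCountableTopology_of_isOpenPosMeasure [OpensMeasurableSpace X] (μ : Measure X)
    [SFinite μ] [μ.IsOpenPosMeasure] : SecondCountableTopology X := by
  refine secondCountable_of_almost_dense_set fun ε hε => ?_
  have hε5 : 0 < ε / 5 := by positivity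
  obtain ⟨t, -, ht_disj, ht_cover⟩ :=
    Vitali.exists_disjoint_subfamily_covering_enlargement_closedBall
      (univ : Set X) id (fun _ => ε / 5) (ε / 5) (fun _ _ => le_rfl) 5 (by norm_num)
  refine ⟨t, ?_, fun x => ?_⟩
  · have h_countable := Measure.countable_meas_pos_of_disjoint_iUnion (μ := μ)
      (As := fun x : t => closedBall (x : X) (ε / 5))
      (fun _ => isClosed_closedBall.measurableSet) ht_disj.subtype
    have h_pos (x : t) : 0 < μ (closedBall (x : X) (ε / 5)) := measure_closedBall_pos μ _ hε5
    simpa only [h_pos, ofPred_true, countable_univ_iff, countable_coe_iff] using h_countable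
  · obtain ⟨y, hy, hsub⟩ := ht_cover x (mem_univ x)
    refine ⟨y, hy, ?_⟩
    simpa only [id, mul_div_cancel₀ ε (OfNat.ofNat_ne_zero 5)] using
      mem_closedBall.1 (hsub (mem_closedBall_self hε5.le))

theorem exists_seq_isClosed_measure_thickening_lt_top [SecondCountableTopology X] (μ : Measure X)
    [IsLocallyFiniteMeasure μ] :
    ∃ T : ℕ → Set X, (∀ n, IsClosed (T n)) ∧ (∀ x, ∀ᶠ n in atTop, x ∈ T n) ∧
      ∀ n, ∃ δ > 0, μ (thickening δ (T n)) < ⊤ := by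
  set S := μ.finiteSpanningSetsInOpen'
  set U : ℕ → Set X := accumulate S.set
  have hU_open (n : ℕ) : IsOpen (U n) := isOpen_biUnion fun k _ => S.set_mem k
  refine ⟨fun n => (thickening (1 / ((n : ℝ) + 1)) (U n)ᶜ)ᶜ,
    fun n => isOpen_thickening.isClosed_compl, fun x => ?_,
    fun n => ⟨1 / ((n : ℝ) + 1), by positivity, ?_⟩⟩
  · obtain ⟨N, hN⟩ : ∃ N, x ∈ U N := by
      simpa only [U, ← mem_iUnion, iUnion_accumulate, S.spanning] using mem_univ x
    obtain ⟨ε, hε, hball⟩ := Metric.isOpen_iff.1 (hU_open N) x hN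
    filter_upwards [eventually_ge_atTop N,
      tendsto_one_div_add_atTop_nhds_zero_nat.eventually_lt_const hε] with n hn hnε hx
    obtain ⟨z, hzU, hz⟩ := mem_thickening_iff.1 hx
    exact hzU (monotone_accumulate hn (hball (mem_ball'.2 (hz.trans hnε))))
  · refine (measure_mono (thickening_compl_thickening_self_subset_compl _ _)).trans_lt ?_
    rw [compl_compl]
    exact measure_biUnion_lt_top (finite_le_nat n) fun k _ => S.finite k

theorem eventually_measure_closedBall_lt_top [IsUnifLocDoublingMeasure μ]
    [IsLocallyFiniteMeasure μ] : ∀ᶠ r in 𝓝[>] 0, ∀ x, μ (closedBall x r) < ⊤ := by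
  obtain ⟨δ, hδ, hdbl⟩ := mem_nhdsGT_iff_exists_Ioo_subset.1
    (IsUnifLocDoublingMeasure.eventually_measure_le_doublingConstant_mul μ)
  filter_upwards [Ioo_mem_nhdsGT hδ] with r ⟨hr, hrδ⟩ x
  -- Doubling carries finiteness from arbitrarily small balls up to a radius not depending on `x`.
  have h_halve (n : ℕ) : μ (closedBall x (r / 2 ^ n)) < ⊤ → μ (closedBall x r) < ⊤ := by
    induction n with
    | zero => simp only [pow_zero, div_one, imp_self]
    | succ n ih =>
      intro h
      have hmem : r / 2 ^ (n + 1) ∈ Ioo 0 δ :=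
        ⟨by positivity, (div_le_self hr.le (one_le_pow₀ one_le_two)).trans_lt hrδ⟩
      have h_double := hdbl hmem x
      rw [show 2 * (r / 2 ^ (n + 1)) = r / 2 ^ n by rw [pow_succ]; field_simp] at h_double
      exact ih (h_double.trans_lt (ENNReal.mul_lt_top ENNReal.coe_lt_top h))
  obtain ⟨s, hs, hsμ⟩ := μ.finiteAt_nhds x
  obtain ⟨ε, hε, hball⟩ := Metric.mem_nhds_iff.1 hs
  obtain ⟨n, hn⟩ := exists_pow_lt_of_lt_one (div_pos hε hr) (one_half_lt_one : (1 / 2 : ℝ) < 1)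
  refine h_halve n ((measure_mono ((closedBall_subset_ball ?_).trans hball)).trans_lt hsμ)
  rwa [lt_div_iff₀ hr, one_div, inv_pow, inv_mul_eq_div] at hn

theorem setLIntegral_inv_measure_closedBall_le {C : ℝ≥0} {r : ℝ}
    (hC : ∀ x, μ (closedBall x (2 * r)) ≤ C * μ (closedBall x r)) (y : X) :
    ∫⁻ x in closedBall y r, (μ (closedBall x r))⁻¹ ∂μ ≤ C := by
  rcases eq_or_ne (μ (closedBall y r)) 0 with hy | hy
  · simp only [setLIntegral_measure_zero _ _ hy, zero_le]
  have h_inv : ∀ x ∈ closedBall y r, (μ (closedBall x r))⁻¹ ≤ C * (μ (closedBall y r))⁻¹ := by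
    intro x hx
    have h_le : μ (closedBall y r) ≤ C * μ (closedBall x r) :=
      (measure_mono (closedBall_subset_closedBall'
        (by linarith [mem_closedBall'.1 hx]))).trans (hC x)
    have hC0 : (C : ℝ≥0∞) ≠ 0 := by
      intro h
      exact hy (by simpa only [h, zero_mul, nonpos_iff_eq_zero] using h_le)
    rwa [← ENNReal.inv_le_inv, ENNReal.mul_inv (.inl hC0) (.inl ENNReal.coe_ne_top),
      ENNReal.inv_mul_le_iff hC0 ENNReal.coe_ne_top] at h_le
  calc ∫⁻ x in closedBall y r, (μ (closedBall x r))⁻¹ ∂μ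
      ≤ ∫⁻ _ in closedBall y r, C * (μ (closedBall y r))⁻¹ ∂μ :=
        setLIntegral_mono measurable_const h_inv
    _ = C * ((μ (closedBall y r))⁻¹ * μ (closedBall y r)) := by rw [setLIntegral_const, mul_assoc]
    _ ≤ C := mul_le_of_le_one_right' (ENNReal.inv_mul_le_one _)

end Measure

section BallAverage

variable {X E : Type*} [PseudoMetricSpace X] [MeasurableSpace X] [NormedAddCommGroup E]
  [NormedSpace ℝ E]

/-- The averaging operator `A_r` over closed balls of radius `r`, for functions with values in a
real normed space; for real-valued functions it is `avg`. -/
noncomputable def ballAverage (μ : Measure X) (r : ℝ) (f : X → E) (x : X) : E :=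
  ⨍ y in closedBall x r, f y ∂μ

theorem avg_eq_ballAverage {Y : Type*} [MetricSpace Y] [MeasurableSpace Y] (μ : Measure Y)
    (r : ℝ) (f : Y → ℝ) : avg μ r f = ballAverage μ r f :=
  funext fun x => (setAverage_eq μ f (closedBall x r)).symm

variable {μ : Measure X} {p : ℝ≥0∞} {r R : ℝ} {C : ℝ≥0} {f g : X → E}

theorem ballAverage_sub_apply {x : X} (hf : IntegrableOn f (closedBall x r) μ)
    (hg : IntegrableOn g (closedBall x r) μ) :
    ballAverage μ r (f - g) x = ballAverage μ r f x - ballAverage μ r g x := by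
  simp only [ballAverage, setAverage_eq, Pi.sub_apply, integral_sub hf hg, smul_sub]

theorem norm_ballAverage_le_of_norm_le (hf : ∀ x, ‖f x‖ ≤ R) (x : X) :
    ‖ballAverage μ r f x‖ ≤ R :=
  norm_average_le_of_norm_le ((norm_nonneg _).trans (hf x)) hf

theorem ballAverage_eq_zero_of_notMem_thickening {δ : ℝ} (hr : r < δ) {x : X}
    (hx : x ∉ thickening δ (Function.support f)) : ballAverage μ r f x = 0 := by
  have h_zero : ∀ y ∈ closedBall x r, f y = 0 := fun y hy => by
    by_contra hfy
    exact hx (mem_thickening_iff.2 ⟨y, hfy, (mem_closedBall'.1 hy).trans_lt hr⟩)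
  rw [ballAverage, setAverage_eq, setIntegral_eq_zero_of_forall_eq_zero h_zero, smul_zero]

section SecondCountable

variable [OpensMeasurableSpace X] [SecondCountableTopology X]

theorem measurableSet_snd_mem_closedBall_fst (r : ℝ) :
    MeasurableSet {q : X × X | q.2 ∈ closedBall q.1 r} :=
  (isClosed_le (continuous_snd.dist continuous_fst) continuous_const).measurableSet

theorem measurable_measure_closedBall (μ : Measure X) [SFinite μ] (r : ℝ) :
    Measurable fun x => μ (closedBall x r) :=
  measurable_measure_prodMk_left (measurableSet_snd_mem_closedBall_fst r)

variable [SFinite μ]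

theorem aestronglyMeasurable_ballAverage (hf : AEStronglyMeasurable f μ) (r : ℝ) :
    AEStronglyMeasurable (ballAverage μ r f) μ := by
  have h_integral : AEStronglyMeasurable (fun x => ∫ y in closedBall x r, f y ∂μ) μ := by
    simp_rw [← integral_indicator isClosed_closedBall.measurableSet]
    exact (hf.comp_snd.indicator (measurableSet_snd_mem_closedBall_fst r)).integral_prod_right'
  have h_eq : ballAverage μ r f =
      fun x => (μ.real (closedBall x r))⁻¹ • ∫ y in closedBall x r, f y ∂μ :=
    funext fun x => setAverage_eq μ f (closedBall x r)
  rw [h_eq]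
  exact (measurable_measure_closedBall μ r).ennreal_toReal.inv.aestronglyMeasurable.smul h_integral

theorem lintegral_setLAverage_closedBall_le
    (hC : ∀ x, μ (closedBall x (2 * r)) ≤ C * μ (closedBall x r)) {h : X → ℝ≥0∞}
    (hh : AEMeasurable h μ) :
    ∫⁻ x, ⨍⁻ y in closedBall x r, h y ∂μ ∂μ ≤ C * ∫⁻ y, h y ∂μ := by
  let w : X → ℝ≥0∞ := fun x => (μ (closedBall x r))⁻¹
  have hw : Measurable w := (measurable_measure_closedBall μ r).inv
  let K : X × X → ℝ≥0∞ :=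
    {q : X × X | q.2 ∈ closedBall q.1 r}.indicator fun q => w q.1 * h q.2
  have hK : AEMeasurable K (μ.prod μ) :=
    ((hw.comp measurable_fst).aemeasurable.mul hh.comp_snd).indicator
      (measurableSet_snd_mem_closedBall_fst r)
  have hK_fst (x : X) : ∫⁻ y, K (x, y) ∂μ = ⨍⁻ y in closedBall x r, h y ∂μ := by
    rw [setLAverage_eq, ENNReal.div_eq_inv_mul, ← lintegral_const_mul'' _ hh.restrict,
      ← lintegral_indicator isClosed_closedBall.measurableSet]
    rfl
  have hK_snd (y : X) : ∫⁻ x, K (x, y) ∂μ = (∫⁻ x in closedBall y r, w x ∂μ) * h y := by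
    rw [← lintegral_mul_const _ hw, ← lintegral_indicator isClosed_closedBall.measurableSet]
    exact lintegral_congr fun x => indicator_eq_indicator mem_closedBall_comm rfl
  calc ∫⁻ x, ⨍⁻ y in closedBall x r, h y ∂μ ∂μ
      = ∫⁻ x, ∫⁻ y, K (x, y) ∂μ ∂μ := lintegral_congr fun x => (hK_fst x).symm
    _ = ∫⁻ y, ∫⁻ x, K (x, y) ∂μ ∂μ := lintegral_lintegral_swap hK
    _ = ∫⁻ y, (∫⁻ x in closedBall y r, w x ∂μ) * h y ∂μ := lintegral_congr hK_snd
    _ ≤ ∫⁻ y, C * h y ∂μ :=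
        lintegral_mono fun y => mul_le_mul_left (setLIntegral_inv_measure_closedBall_le hC y) _
    _ = C * ∫⁻ y, h y ∂μ := lintegral_const_mul'' _ hh

theorem eLpNorm_ballAverage_le (hp1 : 1 ≤ p) (hp : p ≠ ⊤)
    (hC : ∀ x, μ (closedBall x (2 * r)) ≤ C * μ (closedBall x r))
    (hf : AEStronglyMeasurable f μ) :
    eLpNorm (ballAverage μ r f) p μ ≤ (C : ℝ≥0∞) ^ (1 / p.toReal) * eLpNorm f p μ := by
  have hp0 : p ≠ 0 := (one_pos.trans_le hp1).ne'
  have hp1' : 1 ≤ p.toReal := by simpa only [ENNReal.toReal_one] using ENNReal.toReal_mono hp hp1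
  rw [eLpNorm_eq_lintegral_rpow_enorm_toReal hp0 hp, eLpNorm_eq_lintegral_rpow_enorm_toReal hp0 hp,
    ← ENNReal.mul_rpow_of_nonneg _ _ (by positivity)]
  gcongr
  calc ∫⁻ x, ‖ballAverage μ r f x‖ₑ ^ p.toReal ∂μ
      ≤ ∫⁻ x, ⨍⁻ y in closedBall x r, ‖f y‖ₑ ^ p.toReal ∂μ ∂μ :=
        lintegral_mono fun x => enorm_average_rpow_le_laverage hp1' hf.restrict
    _ ≤ C * ∫⁻ y, ‖f y‖ₑ ^ p.toReal ∂μ :=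
        lintegral_setLAverage_closedBall_le hC (hf.enorm.pow_const _)

theorem eLpNorm_ballAverage_sub_self_le (hp1 : 1 ≤ p) (hp : p ≠ ⊤)
    (hC : ∀ x, μ (closedBall x (2 * r)) ≤ C * μ (closedBall x r))
    (hr : ∀ x, μ (closedBall x r) < ⊤) (hf : MemLp f p μ) (hg : MemLp g p μ) :
    eLpNorm (ballAverage μ r f - f) p μ ≤
      ((C : ℝ≥0∞) ^ (1 / p.toReal) + 1) * eLpNorm (f - g) p μ +
        eLpNorm (ballAverage μ r g - g) p μ := by
  have h_int {h : X → E} (hh : MemLp h p μ) (x : X) : IntegrableOn h (closedBall x r) μ :=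
    have := isFiniteMeasure_restrict.2 (hr x).ne
    (hh.restrict _).integrable hp1
  have h_decomp : ballAverage μ r f - f =
      ballAverage μ r (f - g) - (f - g) + (ballAverage μ r g - g) := by
    funext x
    simp only [Pi.add_apply, Pi.sub_apply, ballAverage_sub_apply (h_int hf x) (h_int hg x)]
    abel
  have hfg : AEStronglyMeasurable (f - g) μ := hf.1.sub hg.1
  have hAfg := aestronglyMeasurable_ballAverage hfg r
  have hAg := aestronglyMeasurable_ballAverage hg.1 r
  calc eLpNorm (ballAverage μ r f - f) p μ
      ≤ eLpNorm (ballAverage μ r (f - g)) p μ + eLpNorm (f - g) p μ +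
          eLpNorm (ballAverage μ r g - g) p μ := by
        rw [h_decomp]
        exact (eLpNorm_add_le (hAfg.sub hfg) (hAg.sub hg.1) hp1).trans
          (add_le_add_left (eLpNorm_sub_le hAfg hfg hp1) _)
    _ ≤ _ := by
        rw [add_mul, one_mul]
        gcongr
        exact eLpNorm_ballAverage_le hp1 hp hC hfg

end SecondCountable

section Doubling

variable [BorelSpace X] [SecondCountableTopology X] [IsUnifLocDoublingMeasure μ]
  [IsLocallyFiniteMeasure μ]

theorem ae_tendsto_ballAverage [CompleteSpace E] (hf : LocallyIntegrable f μ) :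
    ∀ᵐ x ∂μ, Tendsto (fun r => ballAverage μ r f x) (𝓝[>] 0) (𝓝 (f x)) := by
  filter_upwards [IsUnifLocDoublingMeasure.ae_tendsto_average μ hf 0] with x hx
  refine hx (fun _ => x) id tendsto_id (Eventually.of_forall fun r => ?_)
  exact mem_closedBall_self (zero_mul r).ge

theorem exists_eventually_eLpNorm_ballAverage_sub_self_le (hp1 : 1 ≤ p) (hp : p ≠ ⊤) :
    ∃ K : ℝ≥0∞, K ≠ ⊤ ∧ ∀ᶠ r in 𝓝[>] 0, ∀ f g : X → E, MemLp f p μ → MemLp g p μ →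
      eLpNorm (ballAverage μ r f - f) p μ ≤
        K * eLpNorm (f - g) p μ + eLpNorm (ballAverage μ r g - g) p μ := by
  refine ⟨IsUnifLocDoublingMeasure.doublingConstant μ ^ (1 / p.toReal) + 1, by finiteness, ?_⟩
  filter_upwards [IsUnifLocDoublingMeasure.eventually_measure_le_doublingConstant_mul μ,
    eventually_measure_closedBall_lt_top (μ := μ)] with r hC hr f g hf hg
  exact eLpNorm_ballAverage_sub_self_le hp1 hp hC hr hf hg

variable [CompleteSpace E]

theorem tendsto_eLpNorm_ballAverage_sub_self_of_norm_le (hp : p ≠ ⊤)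
    (hf : AEStronglyMeasurable f μ) (hfR : ∀ x, ‖f x‖ ≤ R) {δ : ℝ} (hδ : 0 < δ)
    (hδμ : μ (thickening δ (Function.support f)) < ⊤) :
    Tendsto (fun r => eLpNorm (ballAverage μ r f - f) p μ) (𝓝[>] 0) (𝓝 0) := by
  have hf_loc : LocallyIntegrable f μ := fun x =>
    let ⟨s, hs, hsμ⟩ := μ.finiteAt_nhds x
    ⟨s, hs, IntegrableOn.of_bound hsμ hf.restrict R (Eventually.of_forall hfR)⟩
  refine tendsto_eLpNorm_zero_of_dominated hp
    (memLp_indicator_const p isOpen_thickening.measurableSet (2 * R) (.inr hδμ.ne))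
    (fun r => (aestronglyMeasurable_ballAverage hf r).sub hf) ?_ ?_
  · filter_upwards [Ioo_mem_nhdsGT hδ] with r ⟨_, hrδ⟩
    refine Eventually.of_forall fun x => ?_
    by_cases hx : x ∈ thickening δ (Function.support f)
    · have hR : 0 ≤ R := (norm_nonneg _).trans (hfR x)
      rw [indicator_of_mem hx, Real.norm_of_nonneg (by positivity), two_mul]
      exact (norm_sub_le _ _).trans (add_le_add (norm_ballAverage_le_of_norm_le hfR x) (hfR x))
    · have hfx : f x = 0 :=
        Function.notMem_support.1 fun h => hx (self_subset_thickening hδ _ h)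
      simp only [Pi.sub_apply, hfx, ballAverage_eq_zero_of_notMem_thickening hrδ hx, sub_zero,
        norm_zero, norm_nonneg]
  · filter_upwards [ae_tendsto_ballAverage hf_loc] with x hx
    exact tendsto_sub_nhds_zero_iff.2 hx

theorem tendsto_eLpNorm_ballAverage_sub_self (hp1 : 1 ≤ p) (hp : p ≠ ⊤) (hf : MemLp f p μ) :
    Tendsto (fun r => eLpNorm (ballAverage μ r f - f) p μ) (𝓝[>] 0) (𝓝 0) := by
  obtain ⟨T, hT_closed, hT_mem, hT_thickening⟩ := exists_seq_isClosed_measure_thickening_lt_top μ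
  let S : ℕ → Set X := fun n => T n ∩ {x | ‖f x‖ ≤ n}
  have hS (n : ℕ) : NullMeasurableSet (S n) μ :=
    (hT_closed n).measurableSet.nullMeasurableSet.inter
      (nullMeasurableSet_le hf.1.norm.aemeasurable aemeasurable_const)
  have hS_mem (x : X) : ∀ᶠ n in atTop, x ∈ S n :=
    (hT_mem x).and (tendsto_natCast_atTop_atTop.eventually_ge_atTop ‖f x‖)
  have h_trunc (n : ℕ) : Tendsto
      (fun r => eLpNorm (ballAverage μ r ((S n).indicator f) - (S n).indicator f) p μ)
      (𝓝[>] 0) (𝓝 0) := by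
    obtain ⟨δ, hδ, hδμ⟩ := hT_thickening n
    refine tendsto_eLpNorm_ballAverage_sub_self_of_norm_le (R := n) hp (hf.1.indicator₀ (hS n))
      (fun x => ?_) hδ ((measure_mono (thickening_subset_of_subset δ ?_)).trans_lt hδμ)
    · rw [norm_indicator_eq_indicator_norm]
      exact indicator_le' (fun x hx => hx.2) (fun _ _ => n.cast_nonneg) x
    · exact support_indicator_subset.trans inter_subset_left
  obtain ⟨K, hK, h_le⟩ :=
    exists_eventually_eLpNorm_ballAverage_sub_self_le (E := E) (μ := μ) hp1 hp
  have h_approx : Tendsto (fun n => K * eLpNorm (f - (S n).indicator f) p μ) atTop (𝓝 0) := by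
    simpa only [mul_zero] using ENNReal.Tendsto.const_mul
      (tendsto_eLpNorm_sub_indicator hp hf hS hS_mem) (.inr hK)
  refine ENNReal.tendsto_nhds_zero.2 fun ε hε => ?_
  obtain ⟨n, hn⟩ := (ENNReal.tendsto_nhds_zero.1 h_approx _ (ENNReal.half_pos hε.ne')).exists
  filter_upwards [h_le, ENNReal.tendsto_nhds_zero.1 (h_trunc n) _ (ENNReal.half_pos hε.ne')]
    with r hr hrn
  have h_memLp : MemLp ((S n).indicator f) p μ :=
    ⟨hf.1.indicator₀ (hS n), (eLpNorm_indicator_le f).trans_lt hf.2⟩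
  exact (hr _ _ hf h_memLp).trans ((add_le_add hn hrn).trans_eq (ENNReal.add_halves ε))

theorem avg_approx_of_relCompact_general [Fact (1 ≤ p)] (hp : p ≠ ⊤) {F : Set (Lp E p μ)}
    (hF : TotallyBounded F) {ε : ℝ≥0∞} (hε : 0 < ε) :
    ∀ᶠ r in 𝓝[>] 0, ∀ f ∈ F, eLpNorm (ballAverage μ r f - ⇑f) p μ < ε := by
  have hp1 : 1 ≤ p := Fact.out
  obtain ⟨K, hK, h_le⟩ :=
    exists_eventually_eLpNorm_ballAverage_sub_self_le (E := E) (μ := μ) hp1 hp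
  refine eventually_forall_lt_of_totallyBounded
    (φ := fun r (f : Lp E p μ) => eLpNorm (ballAverage μ r f - ⇑f) p μ) hK ?_
    (fun f => tendsto_eLpNorm_ballAverage_sub_self hp1 hp (Lp.memLp f)) hF hε
  filter_upwards [h_le] with r hr f g
  simpa only [Lp.edist_def] using hr f g (Lp.memLp f) (Lp.memLp g)

end Doubling

end BallAverage

theorem avg_approx_of_relCompact {X : Type*} [MetricSpace X] [MeasurableSpace X] [BorelSpace X]
    (μ : Measure X)
    (hball : ∀ (x : X) (r : ℝ), 0 < r → μ (closedBall x r) ≠ 0 ∧ μ (closedBall x r) ≠ ⊤)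
    (γ : ℝ) (hγ : 1 ≤ γ)
    (hdbl : ∀ (x : X) (r : ℝ), 0 < r →
      μ (closedBall x (2 * r)) ≤ ENNReal.ofReal γ * μ (closedBall x r))
    (p : ℝ≥0∞) [Fact (1 ≤ p)] (hp' : p ≠ ⊤)
    (F : Set (MeasureTheory.Lp ℝ p μ)) (hF : IsCompact (closure F)) :
    ∀ ε : ℝ, 0 < ε → ∃ δ : ℝ, 0 < δ ∧ ∀ f ∈ F, ∀ r : ℝ, 0 < r → r < δ →
      eLpNorm (fun x => avg μ r f x - f x) p μ < ENNReal.ofReal ε := by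
  intro ε hε
  have h_finite : ∀ x r, 0 < r → μ (closedBall x r) < ⊤ := fun x r hr => (hball x r hr).2.lt_top
  have : IsLocallyFiniteMeasure μ := isLocallyFiniteMeasure_of_measure_closedBall_lt_top h_finite
  have : SigmaFinite μ := sigmaFinite_of_measure_closedBall_lt_top h_finite
  have : μ.IsOpenPosMeasure :=
    isOpenPosMeasure_of_measure_closedBall_ne_zero fun x r hr => (hball x r hr).1
  have : SecondCountableTopology X := secondCountableTopology_of_isOpenPosMeasure μ
  have : IsUnifLocDoublingMeasure μ :=
    ⟨γ.toNNReal, eventually_mem_nhdsWithin.mono fun r hr x => hdbl x r hr⟩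
  obtain ⟨δ, hδ, h_lt⟩ := mem_nhdsGT_iff_exists_Ioo_subset.1
    (avg_approx_of_relCompact_general hp' (hF.totallyBounded.subset subset_closure)
      (ENNReal.ofReal_pos.2 hε))
  refine ⟨δ, hδ, fun f hf r hr hrδ => ?_⟩
  rw [avg_eq_ballAverage]
  exact h_lt ⟨hr, hrδ⟩ f hf
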